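/- Let n = 2m be a positive even integer. Let H be a complex Hilbert space with grading operator ε, F a bounded operator with F² = 1 and Fε = −εF, Ã a unital ℂ-algebra, and ρ : Ã → B(H) a unital homomorphism into even operators with Fρ(a) − ρ(a)F (n+1)-Schatten for all a ∈ Ã. Then: (i) [F,ω] is trace class for every ω ∈ Ωⁿ, so Tr_s(ω) := (1/2)Trace(εF[F,ω]) is defined on Ωⁿ; (ii) Tr_s(dω) = 0 for every ω ∈ Ω^{n−1}; and (iii) for ω₁ ∈ Ω^{n₁} and ω₂ ∈ Ω^{n₂} with n₁ + n₂ = n, Tr_s(ω₁ω₂) = (−1)^{n₁n₂} Tr_s(ω₂ω₁). That is, Tr_s restricted to Ωⁿ is a closed graded trace of dimension n on the differential graded algebra Ω. -/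

import Mathlib

open scoped ENNReal

noncomputable section

variable {H : Type*} [NormedAddCommGroup H] [InnerProductSpace ℂ H] [CompleteSpace H]
variable {A : Type*} [Ring A] [Algebra ℂ A]

/-- The `n`-th singular value of a (compact) operator `T` (approximation numbers). -/
def sval (T : H →L[ℂ] H) (n : ℕ) : ℝ :=
  sInf {c : ℝ | ∃ R : H →L[ℂ] H,
    Module.rank ℂ (LinearMap.range (R : H →ₗ[ℂ] H)) ≤ (n : Cardinal) ∧ c = ‖T - R‖}

/-- The `p`-Schatten norm `‖T‖_p = (Σ_n s_n(T)^p)^(1/p)`, valued in `ℝ≥0∞`. -/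
def schattenNorm (p : ℝ) (T : H →L[ℂ] H) : ℝ≥0∞ :=
  (∑' n : ℕ, ENNReal.ofReal (sval T n ^ p)) ^ (1 / p)

/-- `T` is a `p`-Schatten operator: compact with finite `p`-Schatten norm. -/
def MemSchatten (p : ℝ) (T : H →L[ℂ] H) : Prop :=
  IsCompactOperator (⇑T) ∧ schattenNorm p T < ⊤

/-- The trace of an operator, computed in a (choice of) Hilbert basis of `H`. -/
def opTrace (T : H →L[ℂ] H) : ℂ :=
  ∑' i : (exists_hilbertBasis ℂ H).choose,
    @inner ℂ H _ ((exists_hilbertBasis ℂ H).choose_spec.choose i)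
      (T ((exists_hilbertBasis ℂ H).choose_spec.choose i))

/-- The even part of `θ` with respect to the grading `ε`. -/
def evenPart (ε θ : H →L[ℂ] H) : H →L[ℂ] H := (2 : ℂ)⁻¹ • (θ + ε * θ * ε)

/-- The odd part of `θ` with respect to the grading `ε`. -/
def oddPart (ε θ : H →L[ℂ] H) : H →L[ℂ] H := (2 : ℂ)⁻¹ • (θ - ε * θ * ε)

/-- The graded commutator `[F, θ]`, extended additively from homogeneous operators. -/
def gComm (ε F θ : H →L[ℂ] H) : H →L[ℂ] H :=
  (F * evenPart ε θ - evenPart ε θ * F) + (F * oddPart ε θ + oddPart ε θ * F)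

/-- The differential `dθ := i[F, θ]`. -/
def gD (ε F θ : H →L[ℂ] H) : H →L[ℂ] H := Complex.I • gComm ε F θ

/-- The graded trace `Tr_s(θ) := (1/2)·Trace(εF[F,θ])`. -/
def Trs (ε F θ : H →L[ℂ] H) : ℂ := (2 : ℂ)⁻¹ * opTrace (ε * F * gComm ε F θ)

/-- `dT = i(FT - TF)` for an even operator `T`. -/
def dOp (F T : H →L[ℂ] H) : H →L[ℂ] H := Complex.I • (F * T - T * F)

/-- The ordered product `f s * f (s+1) * ⋯ * f (s+k-1)` of operators. -/
def opList (f : ℕ → H →L[ℂ] H) (s k : ℕ) : H →L[ℂ] H := ((List.range' s k).map f).prod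

/-- `Ω^j`: the linear span in `B(H)` of the operators `ρ(a₀)dρ(a₁)⋯dρ(a_j)`. -/
def Omega (ρ : A →ₐ[ℂ] (H →L[ℂ] H)) (F : H →L[ℂ] H) (j : ℕ) : Submodule ℂ (H →L[ℂ] H) :=
  Submodule.span ℂ {x | ∃ a : Fin (j + 1) → A,
    x = ρ (a 0) *
      opList (fun k => dOp F (ρ (a ⟨k % (j + 1), Nat.mod_lt _ (Nat.succ_pos j)⟩))) 1 j}

/-!
Since `ε² = 1`, the graded commutator is `[F, θ] = Fθ - (εθε)F`: a derivation twisted by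
conjugation with `ε`, which squares to zero and takes values in the commutant of `εF`. Hence every
`dρ(a)` is closed, and `[F, ρ(a₀)dρ(a₁)⋯dρ(a_j)]` is up to a scalar the product of the `j + 1`
operators `dρ(aᵢ)`. For `ω₁` and `ω₂` of total degree `n`, the product `[F, ω₁]ω₂` thus contains
`n + 1` factors from the `(n + 1)`-Schatten class, and it is trace class by the submultiplicativity
of approximation numbers. The Leibniz rule writes `εF[F, ω₁ω₂]` as a sum of two such products, and
the cyclicity of the trace turns their sum into an expression that is symmetric in `ω₁` and `ω₂` up
to the sign `(-1)^(n₁n₂)`.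
-/

open Filter Topology

section Sequences

theorem summable_comp_div {f : ℕ → ℝ} (hf : Summable f) (hf0 : ∀ k, 0 ≤ f k) {N : ℕ}
    (hN : N ≠ 0) : Summable fun i => f (i / N) := by
  have : NeZero N := ⟨hN⟩
  rw [← (Nat.divModEquiv N).symm.summable_iff]
  have hmul : Summable fun p : ℕ × Fin N => f p.1 * 1 :=
    hf.mul_of_nonneg Summable.of_finite hf0 fun _ => zero_le_one
  refine hmul.congr fun p => ?_
  have hdiv : (Nat.divModEquiv N).symm p / N = p.1 :=
    congrArg Prod.fst ((Nat.divModEquiv N).apply_symm_apply p)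
  rw [Function.comp_apply, hdiv, mul_one]

theorem le_comp_div_of_antitone {f g : ℕ → ℝ} (hf : Antitone f) {N : ℕ}
    (hfg : ∀ k, f (N * k) ≤ g k) (i : ℕ) : f i ≤ g (i / N) :=
  (hf (Nat.mul_div_le i N)).trans (hfg _)

theorem summable_of_antitone_of_comp_mul_le {f g : ℕ → ℝ} (hf : Antitone f) (hf0 : ∀ k, 0 ≤ f k)
    (hg : Summable g) {N : ℕ} (hN : N ≠ 0) (hfg : ∀ k, f (N * k) ≤ g k) : Summable f :=
  (summable_comp_div hg (fun k => (hf0 _).trans (hfg k)) hN).of_nonneg_of_le hf0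
    (le_comp_div_of_antitone hf hfg)

theorem sum_two_pow_mul_le_tsum {f : ℕ → ℝ} (hf : Antitone f) (hf0 : ∀ k, 0 ≤ f k)
    (hs : Summable f) (J : ℕ) :
    ∑ j ∈ Finset.range J, 2 ^ j * f (2 ^ j - 1) ≤ 2 * ∑' k, f k := by
  obtain _ | J := J
  · simpa using tsum_nonneg hf0
  have hcond : ∑ j ∈ Finset.range (J + 1), 2 ^ j * f (2 ^ j - 1) ≤
      f 0 + 2 * ∑ k ∈ Finset.Ico 1 (2 ^ J), f k := by
    have hshift : ∑ k ∈ Finset.Ico 2 (2 ^ J + 1), f (k - 1) = ∑ k ∈ Finset.Ico 1 (2 ^ J), f k :=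
      (Finset.sum_Ico_add' (fun k => f (k - 1)) 1 (2 ^ J) 1).symm
    simpa [hshift] using Finset.sum_condensed_le (f := fun k => f (k - 1))
      (fun m n _ hmn => hf (Nat.sub_le_sub_right hmn 1)) J
  have hsum : f 0 + ∑ k ∈ Finset.Ico 1 (2 ^ J), f k ≤ ∑' k, f k := by
    simpa using hs.sum_le_tsum (insert 0 (Finset.Ico 1 (2 ^ J))) fun k _ => hf0 k
  linarith [hf0 0]

theorem tendsto_zero_or_tendsto_zero_of_summable_mul {f g : ℕ → ℝ} (hf : Antitone f)
    (hf0 : ∀ k, 0 ≤ f k) (hg : Antitone g) (hg0 : ∀ k, 0 ≤ g k)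
    (hs : Summable fun k => f k * g k) : Tendsto f atTop (𝓝 0) ∨ Tendsto g atTop (𝓝 0) := by
  have hf' := tendsto_atTop_ciInf hf ⟨0, Set.forall_mem_range.2 hf0⟩
  have hg' := tendsto_atTop_ciInf hg ⟨0, Set.forall_mem_range.2 hg0⟩
  have hlim : (⨅ k, f k) * ⨅ k, g k = 0 :=
    tendsto_nhds_unique (hf'.mul hg') hs.tendsto_atTop_zero
  obtain h | h := mul_eq_zero.1 hlim
  · exact .inl (h ▸ hf')
  · exact .inr (h ▸ hg')

open scoped Classical in
theorem list_prod_le_sum_pow_length {ι : Type*} {l : List ι} (hl : l ≠ []) {f : ι → ℝ}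
    (hf : ∀ x, 0 ≤ f x) : (l.map f).prod ≤ ∑ x ∈ l.toFinset, f x ^ l.length := by
  obtain ⟨y, hy, hmax⟩ := l.toFinset.exists_max_image f (l.toFinset_nonempty_iff.2 hl)
  calc (l.map f).prod ≤ (l.map fun _ => f y).prod :=
        List.prod_map_le_prod_map₀ f _ (fun x _ => hf x) fun x hx => hmax x (List.mem_toFinset.2 hx)
    _ = f y ^ l.length := by rw [List.map_const', List.prod_replicate]
    _ ≤ ∑ x ∈ l.toFinset, f x ^ l.length :=
        Finset.single_le_sum (f := fun x => f x ^ l.length) (fun x _ => pow_nonneg (hf x) _) hy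

theorem summable_list_prod {ι : Type*} {l : List ι} (hl : l ≠ []) {f : ι → ℕ → ℝ}
    (hf : ∀ x k, 0 ≤ f x k) (hs : ∀ x ∈ l, Summable fun k => f x k ^ l.length) :
    Summable fun k => (l.map fun x => f x k).prod := by
  classical
  refine (summable_sum fun x hx => hs x (List.mem_toFinset.1 hx)).of_nonneg_of_le
    (fun k => ?_) fun k => list_prod_le_sum_pow_length hl fun x => hf x k
  exact List.prod_nonneg (List.forall_mem_map.2 fun x _ => hf x k)

end Sequences

section ApproximationNumbers

variable {E : Type*} [NormedAddCommGroup E] [InnerProductSpace ℂ E]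

theorem rank_zero_le (n : ℕ) : LinearMap.rank ((0 : E →L[ℂ] E) : E →ₗ[ℂ] E) ≤ n := by
  simp [LinearMap.rank_zero]

theorem rank_sub_le {R R' : E →L[ℂ] E} {m n : ℕ} (hR : LinearMap.rank (R : E →ₗ[ℂ] E) ≤ m)
    (hR' : LinearMap.rank (R' : E →ₗ[ℂ] E) ≤ n) :
    LinearMap.rank ((R - R' : E →L[ℂ] E) : E →ₗ[ℂ] E) ≤ (m + n : ℕ) := by
  have hneg : LinearMap.rank (-(R' : E →ₗ[ℂ] E)) ≤ n := by
    rwa [LinearMap.rank, LinearMap.range_neg]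
  rw [ContinuousLinearMap.toLinearMap_sub, sub_eq_add_neg, Nat.cast_add]
  exact (LinearMap.rank_add_le _ _).trans (add_le_add hR hneg)

theorem sval_le_norm_sub (T : E →L[ℂ] E) {R : E →L[ℂ] E} {n : ℕ}
    (hR : LinearMap.rank (R : E →ₗ[ℂ] E) ≤ n) : sval T n ≤ ‖T - R‖ :=
  csInf_le ⟨0, by rintro _ ⟨R, -, rfl⟩; exact norm_nonneg _⟩ ⟨R, hR, rfl⟩

theorem exists_rank_le_norm_sub_lt (T : E →L[ℂ] E) (n : ℕ) {δ : ℝ} (hδ : 0 < δ) :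
    ∃ R : E →L[ℂ] E, LinearMap.rank (R : E →ₗ[ℂ] E) ≤ n ∧ ‖T - R‖ < sval T n + δ := by
  have hlt : sval T n < sval T n + δ := lt_add_of_pos_right _ hδ
  obtain ⟨_, ⟨R, hR, rfl⟩, hTR⟩ :=
    exists_lt_of_csInf_lt (by exact ⟨_, 0, rank_zero_le n, rfl⟩) hlt
  exact ⟨R, hR, hTR⟩

theorem sval_nonneg (T : E →L[ℂ] E) (n : ℕ) : 0 ≤ sval T n :=
  Real.sInf_nonneg (by rintro _ ⟨R, -, rfl⟩; exact norm_nonneg _)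

theorem sval_le_norm (T : E →L[ℂ] E) (n : ℕ) : sval T n ≤ ‖T‖ := by
  simpa using sval_le_norm_sub T (rank_zero_le n)

theorem sval_antitone (T : E →L[ℂ] E) : Antitone (sval T) := by
  refine fun m n hmn => le_of_forall_pos_le_add fun δ hδ => ?_
  obtain ⟨R, hR, hTR⟩ := exists_rank_le_norm_sub_lt T m hδ
  exact (sval_le_norm_sub T (hR.trans (Nat.cast_le.2 hmn))).trans hTR.le

theorem sval_add_le (S T : E →L[ℂ] E) (m n : ℕ) :
    sval (S + T) (m + n) ≤ sval S m + sval T n := by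
  refine le_of_forall_pos_le_add fun δ hδ => ?_
  obtain ⟨R, hR, hSR⟩ := exists_rank_le_norm_sub_lt S m (half_pos hδ)
  obtain ⟨R', hR', hTR'⟩ := exists_rank_le_norm_sub_lt T n (half_pos hδ)
  have hrank : LinearMap.rank ((R + R' : E →L[ℂ] E) : E →ₗ[ℂ] E) ≤ (m + n : ℕ) := by
    rw [Nat.cast_add]
    exact (LinearMap.rank_add_le _ _).trans (add_le_add hR hR')
  calc sval (S + T) (m + n) ≤ ‖S + T - (R + R')‖ := sval_le_norm_sub _ hrank
    _ = ‖(S - R) + (T - R')‖ := by rw [add_sub_add_comm]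
    _ ≤ sval S m + sval T n + δ := by linarith [norm_add_le (S - R) (T - R')]

theorem sval_sub_add_le_of_rank_le (S : E →L[ℂ] E) {R : E →L[ℂ] E} {j : ℕ}
    (hR : LinearMap.rank (R : E →ₗ[ℂ] E) ≤ j) (k : ℕ) : sval (S - R) (k + j) ≤ sval S k := by
  refine le_of_forall_pos_le_add fun δ hδ => ?_
  obtain ⟨R', hR', hSR'⟩ := exists_rank_le_norm_sub_lt S k hδ
  calc sval (S - R) (k + j) ≤ ‖S - R - (R' - R)‖ := sval_le_norm_sub _ (rank_sub_le hR' hR)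
    _ = ‖S - R'‖ := by rw [sub_sub_sub_cancel_right]
    _ ≤ sval S k + δ := hSR'.le

-- For finite-rank approximants `R ≈ S` and `R' ≈ T`, the operator `R (T - R') + S R'` has rank at
-- most `m + n` and differs from `S T` by `(S - R) (T - R')`.
theorem sval_mul_le (S T : E →L[ℂ] E) (m n : ℕ) :
    sval (S * T) (m + n) ≤ sval S m * sval T n := by
  have hδ_le : ∀ δ > 0, sval (S * T) (m + n) ≤ (sval S m + δ) * (sval T n + δ) := by
    intro δ hδ
    obtain ⟨R, hR, hSR⟩ := exists_rank_le_norm_sub_lt S m hδ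
    obtain ⟨R', hR', hTR'⟩ := exists_rank_le_norm_sub_lt T n hδ
    have hrank : LinearMap.rank ((R * (T - R') + S * R' : E →L[ℂ] E) : E →ₗ[ℂ] E) ≤
        (m + n : ℕ) := by
      rw [Nat.cast_add]
      exact (LinearMap.rank_add_le _ _).trans (add_le_add
        ((LinearMap.rank_comp_le_left _ _).trans hR) ((LinearMap.rank_comp_le_right _ _).trans hR'))
    calc sval (S * T) (m + n) ≤ ‖S * T - (R * (T - R') + S * R')‖ := sval_le_norm_sub _ hrank
      _ = ‖(S - R) * (T - R')‖ := by congr 1; noncomm_ring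
      _ ≤ ‖S - R‖ * ‖T - R'‖ := norm_mul_le _ _
      _ ≤ (sval S m + δ) * (sval T n + δ) :=
        mul_le_mul hSR.le hTR'.le (norm_nonneg _) ((norm_nonneg _).trans hSR.le)
  have hlim : Tendsto (fun δ : ℝ => (sval S m + δ) * (sval T n + δ)) (𝓝[>] 0)
      (𝓝 ((sval S m + 0) * (sval T n + 0))) :=
    (Continuous.tendsto (by fun_prop) 0).mono_left nhdsWithin_le_nhds
  simpa using ge_of_tendsto hlim (eventually_nhdsWithin_of_forall hδ_le)

theorem sval_mul_le_norm_mul (S T : E →L[ℂ] E) (n : ℕ) : sval (S * T) n ≤ ‖S‖ * sval T n := by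
  have h := sval_mul_le S T 0 n
  rw [zero_add] at h
  exact h.trans (mul_le_mul_of_nonneg_right (sval_le_norm S 0) (sval_nonneg T n))

theorem summable_sval_mul_pow {T : E →L[ℂ] E} {p : ℕ} (hT : Summable fun k => sval T k ^ p)
    (S : E →L[ℂ] E) : Summable fun k => sval (S * T) k ^ p := by
  refine (hT.mul_left (‖S‖ ^ p)).of_nonneg_of_le (fun k => pow_nonneg (sval_nonneg _ k) p)
    fun k => ?_
  rw [← mul_pow]
  exact pow_le_pow_left₀ (sval_nonneg _ k) (sval_mul_le_norm_mul S T k) p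

theorem sval_list_prod_le (l : List (E →L[ℂ] E)) (k : ℕ) :
    sval l.prod (l.length * k) ≤ (l.map fun T => sval T k).prod := by
  induction l with
  | nil => simpa using (sval_le_norm 1 0).trans ContinuousLinearMap.norm_id_le
  | cons T l ih =>
    rw [List.prod_cons, List.length_cons, add_one_mul, add_comm, List.map_cons, List.prod_cons]
    exact (sval_mul_le _ _ _ _).trans (mul_le_mul_of_nonneg_left ih (sval_nonneg T k))

end ApproximationNumbers

section HolderPair

variable {E : Type*} [NormedAddCommGroup E] [InnerProductSpace ℂ E]

/-- The hypothesis of Hölder's inequality for the product of two operators. It holds when `S` and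
`T` lie in Schatten classes of conjugate exponents, including `1` and `∞`, but avoids naming
those exponents. -/
def IsHolderPair (S T : E →L[ℂ] E) : Prop := Summable fun k => sval S k * sval T k

theorem sval_mul_sval_antitone (S T : E →L[ℂ] E) : Antitone fun k => sval S k * sval T k :=
  fun _ _ hmn =>
    mul_le_mul (sval_antitone S hmn) (sval_antitone T hmn) (sval_nonneg T _) (sval_nonneg S _)

theorem sval_mul_sval_nonneg (S T : E →L[ℂ] E) (k : ℕ) : 0 ≤ sval S k * sval T k :=
  mul_nonneg (sval_nonneg S k) (sval_nonneg T k)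

theorem IsHolderPair.symm {S T : E →L[ℂ] E} (h : IsHolderPair S T) : IsHolderPair T S :=
  h.congr fun _ => mul_comm _ _

theorem IsHolderPair.add_left {S S' T : E →L[ℂ] E} (h : IsHolderPair S T)
    (h' : IsHolderPair S' T) : IsHolderPair (S + S') T := by
  refine summable_of_antitone_of_comp_mul_le (sval_mul_sval_antitone _ _) (sval_mul_sval_nonneg _ _)
    (h.add h') two_ne_zero fun k => ?_
  rw [← add_mul]
  have hsum : sval (S + S') (2 * k) ≤ sval S k + sval S' k := two_mul k ▸ sval_add_le S S' k k
  exact mul_le_mul hsum (sval_antitone T (Nat.le_mul_of_pos_left k two_pos)) (sval_nonneg _ _)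
    (add_nonneg (sval_nonneg S k) (sval_nonneg S' k))

theorem IsHolderPair.mul_left {S T : E →L[ℂ] E} (h : IsHolderPair S T) (X : E →L[ℂ] E) :
    IsHolderPair (X * S) T := by
  refine (Summable.mul_left ‖X‖ h).of_nonneg_of_le (sval_mul_sval_nonneg _ _) fun k => ?_
  rw [← mul_assoc]
  exact mul_le_mul_of_nonneg_right (sval_mul_le_norm_mul X S k) (sval_nonneg T k)

theorem IsHolderPair.smul_left {S T : E →L[ℂ] E} (h : IsHolderPair S T) (c : ℂ) :
    IsHolderPair (c • S) T := by
  simpa using h.mul_left (c • 1)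

theorem IsHolderPair.add_right {S T T' : E →L[ℂ] E} (h : IsHolderPair S T)
    (h' : IsHolderPair S T') : IsHolderPair S (T + T') :=
  (h.symm.add_left h'.symm).symm

theorem IsHolderPair.mul_right {S T : E →L[ℂ] E} (h : IsHolderPair S T) (X : E →L[ℂ] E) :
    IsHolderPair S (X * T) :=
  (h.symm.mul_left X).symm

theorem IsHolderPair.smul_right {S T : E →L[ℂ] E} (h : IsHolderPair S T) (c : ℂ) :
    IsHolderPair S (c • T) :=
  (h.symm.smul_left c).symm

theorem IsHolderPair.summable_sval_mul {S T : E →L[ℂ] E} (h : IsHolderPair S T) :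
    Summable (sval (S * T)) :=
  summable_of_antitone_of_comp_mul_le (sval_antitone _) (sval_nonneg _) h two_ne_zero fun k =>
    two_mul k ▸ sval_mul_le S T k k

theorem isHolderPair_list_prod {l l' : List (E →L[ℂ] E)} (hl : l ++ l' ≠ [])
    (hs : ∀ T ∈ l ++ l', Summable fun k => sval T k ^ (l ++ l').length) :
    IsHolderPair l.prod l'.prod := by
  have hlen : (l ++ l').length ≠ 0 := List.length_eq_zero_iff.not.2 hl
  refine summable_of_antitone_of_comp_mul_le (sval_mul_sval_antitone _ _) (sval_mul_sval_nonneg _ _)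
    (summable_list_prod hl sval_nonneg hs) hlen fun k => ?_
  have hprod : ∀ L : List (E →L[ℂ] E), L.length ≤ (l ++ l').length →
      sval L.prod ((l ++ l').length * k) ≤ (L.map fun T => sval T k).prod := fun L hL =>
    (sval_antitone _ (Nat.mul_le_mul_right k hL)).trans (sval_list_prod_le L k)
  rw [List.map_append, List.prod_append]
  exact mul_le_mul (hprod l (by simp)) (hprod l' (by simp)) (sval_nonneg _ _)
    (List.prod_nonneg (List.forall_mem_map.2 fun T _ => sval_nonneg T k))

end HolderPair

section Trace

variable {E : Type*} [NormedAddCommGroup E] [InnerProductSpace ℂ E]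

theorem exists_eq_sum_inner_smul_of_rank_le {R : H →L[ℂ] H} {r : ℕ}
    (hR : LinearMap.rank (R : H →ₗ[ℂ] H) ≤ r) :
    ∃ (d : ℕ) (f g : Fin d → H), d ≤ r ∧ (∀ l, ‖f l‖ ≤ 1) ∧ (∀ l, ‖g l‖ ≤ ‖R‖) ∧
      ∀ x, R x = ∑ l, inner ℂ (g l) x • f l := by
  have : FiniteDimensional ℂ (R : H →ₗ[ℂ] H).range :=
    Module.rank_lt_aleph0_iff.1 (hR.trans_lt Cardinal.natCast_lt_aleph0)
  let u := stdOrthonormalBasis ℂ (R : H →ₗ[ℂ] H).range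
  have hu : ∀ l, ‖(u l : H)‖ = 1 := u.orthonormal.1
  refine ⟨_, fun l => u l, fun l => ContinuousLinearMap.adjoint R (u l),
    Module.finrank_le_of_rank_le hR, fun l => (hu l).le, fun l => ?_, fun x => ?_⟩
  · simpa [hu] using (ContinuousLinearMap.adjoint R).le_opNorm (u l)
  · have hx := congrArg Subtype.val (u.sum_repr' ⟨R x, x, rfl⟩)
    simpa [ContinuousLinearMap.adjoint_inner_left] using hx.symm

theorem sum_norm_inner_mul_norm_inner_le {ι : Type*} {v : ι → E} (hv : Orthonormal ℂ v) (x y : E)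
    (s : Finset ι) : ∑ i ∈ s, ‖inner ℂ y (v i)‖ * ‖inner ℂ (v i) x‖ ≤ ‖y‖ * ‖x‖ := by
  have hbessel : ∀ z : E, √(∑ i ∈ s, ‖inner ℂ (v i) z‖ ^ 2) ≤ ‖z‖ := fun z =>
    Real.sqrt_le_iff.2 ⟨norm_nonneg z, hv.sum_inner_products_le z⟩
  calc ∑ i ∈ s, ‖inner ℂ y (v i)‖ * ‖inner ℂ (v i) x‖
      = ∑ i ∈ s, ‖inner ℂ (v i) y‖ * ‖inner ℂ (v i) x‖ := by simp only [norm_inner_symm y]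
    _ ≤ √(∑ i ∈ s, ‖inner ℂ (v i) y‖ ^ 2) * √(∑ i ∈ s, ‖inner ℂ (v i) x‖ ^ 2) :=
        Real.sum_mul_le_sqrt_mul_sqrt s _ _
    _ ≤ ‖y‖ * ‖x‖ := mul_le_mul (hbessel y) (hbessel x) (Real.sqrt_nonneg _) (norm_nonneg y)

theorem sum_norm_inner_le_of_rank_le {ι : Type*} {v : ι → H} (hv : Orthonormal ℂ v)
    {R : H →L[ℂ] H} {r : ℕ} (hR : LinearMap.rank (R : H →ₗ[ℂ] H) ≤ r) (s : Finset ι) :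
    ∑ i ∈ s, ‖inner ℂ (v i) (R (v i))‖ ≤ r * ‖R‖ := by
  obtain ⟨d, f, g, hd, hf, hg, hRfg⟩ := exists_eq_sum_inner_smul_of_rank_le hR
  calc ∑ i ∈ s, ‖inner ℂ (v i) (R (v i))‖
      ≤ ∑ i ∈ s, ∑ l, ‖inner ℂ (g l) (v i)‖ * ‖inner ℂ (v i) (f l)‖ := by
        refine Finset.sum_le_sum fun i _ => ?_
        simp only [hRfg, inner_sum, inner_smul_right, ← norm_mul]
        exact norm_sum_le _ _
    _ = ∑ l, ∑ i ∈ s, ‖inner ℂ (g l) (v i)‖ * ‖inner ℂ (v i) (f l)‖ := Finset.sum_comm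
    _ ≤ ∑ _l : Fin d, ‖R‖ * 1 := Finset.sum_le_sum fun l _ =>
        (sum_norm_inner_mul_norm_inner_le hv _ _ s).trans
          (mul_le_mul (hg l) (hf l) (norm_nonneg _) (norm_nonneg _))
    _ = d * ‖R‖ := by simp
    _ ≤ r * ‖R‖ := mul_le_mul_of_nonneg_right (Nat.cast_le.2 hd) (norm_nonneg R)

theorem sum_norm_inner_sub_le {ι : Type*} (v : ι → E) (S T : E →L[ℂ] E) (s : Finset ι) :
    ∑ i ∈ s, ‖inner ℂ (v i) (S (v i))‖ - ∑ i ∈ s, ‖inner ℂ (v i) (T (v i))‖ ≤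
      ∑ i ∈ s, ‖inner ℂ (v i) ((S - T) (v i))‖ := by
  rw [← Finset.sum_sub_distrib]
  refine Finset.sum_le_sum fun i _ => ?_
  simpa only [sub_apply, inner_sub_right] using norm_sub_norm_le _ _

-- The diagonal sum is telescoped along approximants of ranks `2 ^ j - 1`: consecutive ones differ
-- by rank at most `3 * 2 ^ j` and by norm at most `2 * a j`.
theorem sum_norm_inner_le_of_dyadic_approx {ι : Type*} {v : ι → H} (hv : Orthonormal ℂ v)
    {T : H →L[ℂ] H} {R : ℕ → H →L[ℂ] H} {a : ℕ → ℝ}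
    (hrank : ∀ j, LinearMap.rank (R j : H →ₗ[ℂ] H) ≤ (2 ^ j - 1 : ℕ)) (ha : Antitone a)
    (hTR : ∀ j, ‖T - R j‖ ≤ a j) (J : ℕ) (s : Finset ι) :
    ∑ i ∈ s, ‖inner ℂ (v i) (R J (v i))‖ ≤ 6 * ∑ j ∈ Finset.range J, 2 ^ j * a j := by
  induction J with
  | zero => simpa using sum_norm_inner_le_of_rank_le hv (hrank 0) s
  | succ J ih =>
    have hnorm : ‖R (J + 1) - R J‖ ≤ 2 * a J :=
      calc ‖R (J + 1) - R J‖ = ‖(T - R J) - (T - R (J + 1))‖ := by rw [sub_sub_sub_cancel_left]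
        _ ≤ ‖T - R J‖ + ‖T - R (J + 1)‖ := norm_sub_le _ _
        _ ≤ 2 * a J := by linarith [hTR J, hTR (J + 1), ha J.le_succ]
    have hincr : ∑ i ∈ s, ‖inner ℂ (v i) ((R (J + 1) - R J) (v i))‖ ≤ 6 * (2 ^ J * a J) :=
      calc ∑ i ∈ s, ‖inner ℂ (v i) ((R (J + 1) - R J) (v i))‖
          ≤ (2 ^ (J + 1) - 1 + (2 ^ J - 1) : ℕ) * ‖R (J + 1) - R J‖ :=
            sum_norm_inner_le_of_rank_le hv (rank_sub_le (hrank _) (hrank _)) s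
        _ ≤ (3 * 2 ^ J : ℕ) * (2 * a J) := by
            refine mul_le_mul (Nat.cast_le.2 ?_) hnorm (norm_nonneg _) (Nat.cast_nonneg _)
            rw [pow_succ]
            omega
        _ = 6 * (2 ^ J * a J) := by push_cast; ring
    rw [Finset.sum_range_succ, mul_add]
    linarith [sum_norm_inner_sub_le v (R (J + 1)) (R J) s]

theorem tendsto_sum_norm_inner {ι : Type*} (v : ι → E) {T : E →L[ℂ] E} {R : ℕ → E →L[ℂ] E}
    (hR : Tendsto R atTop (𝓝 T)) (s : Finset ι) :
    Tendsto (fun j => ∑ i ∈ s, ‖inner ℂ (v i) (R j (v i))‖) atTop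
      (𝓝 (∑ i ∈ s, ‖inner ℂ (v i) (T (v i))‖)) :=
  tendsto_finsetSum _ fun i _ => (tendsto_const_nhds.inner
    (((ContinuousLinearMap.apply ℂ E (v i)).continuous.tendsto T).comp hR)).norm

theorem sum_two_pow_mul_sval_add_le {T : E →L[ℂ] E} (hT : Summable (sval T)) {η : ℝ} (hη : 0 ≤ η)
    (J : ℕ) : ∑ j ∈ Finset.range J, 2 ^ j * (sval T (2 ^ j - 1) + η * (1 / 4) ^ j) ≤
      2 * ∑' k, sval T k + 2 * η := by
  have hsplit : ∀ j, 2 ^ j * (sval T (2 ^ j - 1) + η * (1 / 4) ^ j) =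
      2 ^ j * sval T (2 ^ j - 1) + η * (1 / 2) ^ j := by
    intro j
    rw [show (1 / 2 : ℝ) = 2 * (1 / 4) by norm_num, mul_pow]
    ring
  have hgeom : ∑ j ∈ Finset.range J, (1 / 2 : ℝ) ^ j ≤ 2 :=
    (summable_geometric_two.sum_le_tsum _ fun _ _ => by positivity).trans_eq tsum_geometric_two
  have hsval := sum_two_pow_mul_le_tsum (sval_antitone T) (sval_nonneg T) hT J
  simp only [hsplit, Finset.sum_add_distrib, ← Finset.mul_sum]
  linarith [mul_le_mul_of_nonneg_left hgeom hη]

theorem sum_norm_inner_le_tsum_sval {ι : Type*} {v : ι → H} (hv : Orthonormal ℂ v)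
    {T : H →L[ℂ] H} (hT : Summable (sval T)) (s : Finset ι) :
    ∑ i ∈ s, ‖inner ℂ (v i) (T (v i))‖ ≤ 12 * ∑' k, sval T k := by
  refine le_of_forall_pos_le_add fun η hη => ?_
  let a : ℕ → ℝ := fun j => sval T (2 ^ j - 1) + η / 12 * (1 / 4) ^ j
  have hpow : StrictMono fun j : ℕ => 2 ^ j := pow_right_strictMono₀ one_lt_two
  have ha : Antitone a := fun i j hij => add_le_add
    (sval_antitone T (Nat.sub_le_sub_right (hpow.monotone hij) 1))
    (mul_le_mul_of_nonneg_left (pow_le_pow_of_le_one (by norm_num) (by norm_num) hij)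
      (by positivity))
  choose R hrank hTR using fun j : ℕ =>
    exists_rank_le_norm_sub_lt T (2 ^ j - 1) (by positivity : 0 < η / 12 * (1 / 4) ^ j)
  have ha0 : Tendsto a atTop (𝓝 0) := by
    have hindex : Tendsto (fun j : ℕ => 2 ^ j - 1) atTop atTop :=
      (tendsto_sub_atTop_nat 1).comp hpow.tendsto_atTop
    have hgeom : Tendsto (fun j : ℕ => (1 / 4 : ℝ) ^ j) atTop (𝓝 0) :=
      tendsto_pow_atTop_nhds_zero_of_lt_one (by norm_num) (by norm_num)
    have hadd := (hT.tendsto_atTop_zero.comp hindex).add (hgeom.const_mul (η / 12))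
    rwa [mul_zero, add_zero] at hadd
  have hlim : Tendsto R atTop (𝓝 T) := tendsto_iff_norm_sub_tendsto_zero.2 <|
    squeeze_zero (fun _ => norm_nonneg _) (fun j => norm_sub_rev T (R j) ▸ (hTR j).le) ha0
  refine le_of_tendsto' (tendsto_sum_norm_inner v hlim s) fun J => ?_
  linarith [sum_two_pow_mul_sval_add_le hT (by positivity : 0 ≤ η / 12) J,
    sum_norm_inner_le_of_dyadic_approx hv hrank ha (fun j => (hTR j).le) J s]

theorem summable_inner_of_summable_sval {ι : Type*} {v : ι → H} (hv : Orthonormal ℂ v)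
    {T : H →L[ℂ] H} (hT : Summable (sval T)) : Summable fun i => inner ℂ (v i) (T (v i)) :=
  .of_norm <| summable_of_sum_le (fun _ => norm_nonneg _) (sum_norm_inner_le_tsum_sval hv hT)

theorem norm_tsum_inner_le_tsum_sval {ι : Type*} {v : ι → H} (hv : Orthonormal ℂ v)
    {T : H →L[ℂ] H} (hT : Summable (sval T)) :
    ‖∑' i, inner ℂ (v i) (T (v i))‖ ≤ 12 * ∑' k, sval T k :=
  le_of_tendsto' (summable_inner_of_summable_sval hv hT).hasSum.norm fun s =>
    (norm_sum_le _ _).trans (sum_norm_inner_le_tsum_sval hv hT s)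

theorem hasSum_inner_mul_comm_of_rank_le {ι : Type*} (b : HilbertBasis ι ℂ H) {R : H →L[ℂ] H}
    {r : ℕ} (hR : LinearMap.rank (R : H →ₗ[ℂ] H) ≤ r) (T : H →L[ℂ] H) :
    ∃ t, HasSum (fun i => inner ℂ (b i) ((R * T) (b i))) t ∧
      HasSum (fun i => inner ℂ (b i) ((T * R) (b i))) t := by
  obtain ⟨d, f, g, -, -, -, hRfg⟩ := exists_eq_sum_inner_smul_of_rank_le hR
  refine ⟨∑ l, inner ℂ (g l) (T (f l)), ?_, ?_⟩
  · have hparseval := hasSum_sum fun l (_ : l ∈ Finset.univ) =>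
      b.hasSum_inner_mul_inner (ContinuousLinearMap.adjoint T (g l)) (f l)
    simpa [ContinuousLinearMap.adjoint_inner_left, hRfg, inner_sum, inner_smul_right]
      using hparseval
  · have hparseval := hasSum_sum fun l (_ : l ∈ Finset.univ) =>
      b.hasSum_inner_mul_inner (g l) (T (f l))
    simpa [hRfg, inner_sum, inner_smul_right] using hparseval

theorem tendsto_tsum_sval_zero {Z : ℕ → E →L[ℂ] E} (hZ : Tendsto Z atTop (𝓝 0)) {g : ℕ → ℝ}
    (hg : Summable g) {N : ℕ} (hN : N ≠ 0) (hZg : ∀ j k, sval (Z j) (N * k) ≤ g k) :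
    Tendsto (fun j => ∑' k, sval (Z j) k) atTop (𝓝 0) := by
  have hg0 : ∀ k, 0 ≤ g k := fun k => (sval_nonneg _ _).trans (hZg 0 k)
  have hpointwise : ∀ k, Tendsto (fun j => sval (Z j) k) atTop (𝓝 0) := fun k =>
    squeeze_zero (fun _ => sval_nonneg _ _) (fun _ => sval_le_norm _ _)
      (norm_zero (E := E →L[ℂ] E) ▸ hZ.norm)
  simpa only [tsum_zero] using tendsto_tsum_of_dominated_convergence (summable_comp_div hg hg0 hN)
    hpointwise <| .of_forall fun j k => by
      rw [Real.norm_of_nonneg (sval_nonneg _ _)]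
      exact le_comp_div_of_antitone (sval_antitone _) (hZg j) k

theorem tendsto_tsum_inner_zero {ι : Type*} {v : ι → H} (hv : Orthonormal ℂ v)
    {Z : ℕ → H →L[ℂ] H} (hZ : Tendsto Z atTop (𝓝 0)) {g : ℕ → ℝ} (hg : Summable g) {N : ℕ}
    (hN : N ≠ 0) (hZg : ∀ j k, sval (Z j) (N * k) ≤ g k) :
    Tendsto (fun j => ∑' i, inner ℂ (v i) (Z j (v i))) atTop (𝓝 0) := by
  have hsummable : ∀ j, Summable (sval (Z j)) := fun j =>
    summable_of_antitone_of_comp_mul_le (sval_antitone _) (sval_nonneg _) hg hN (hZg j)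
  refine squeeze_zero_norm (fun j => norm_tsum_inner_le_tsum_sval hv (hsummable j)) ?_
  simpa only [mul_zero] using (tendsto_tsum_sval_zero hZ hg hN hZg).const_mul 12

theorem exists_rank_le_tendsto_of_tendsto_sval_zero {S : E →L[ℂ] E}
    (hS : Tendsto (sval S) atTop (𝓝 0)) :
    ∃ R : ℕ → E →L[ℂ] E, (∀ j, LinearMap.rank (R j : E →ₗ[ℂ] E) ≤ j) ∧ Tendsto R atTop (𝓝 S) ∧
      ∀ j k, sval (S - R j) (2 * k) ≤ sval S k + (1 / 2) ^ k := by
  choose R hrank hSR using fun j : ℕ =>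
    exists_rank_le_norm_sub_lt S j (by positivity : (0 : ℝ) < (1 / 2) ^ j)
  refine ⟨R, hrank, tendsto_iff_norm_sub_tendsto_zero.2 ?_, fun j k => ?_⟩
  · have hlim := hS.add (tendsto_pow_atTop_nhds_zero_of_lt_one (r := (1 / 2 : ℝ)) (by norm_num)
      (by norm_num))
    rw [add_zero] at hlim
    exact squeeze_zero (fun _ => norm_nonneg _) (fun j => norm_sub_rev S (R j) ▸ (hSR j).le) hlim
  obtain hjk | hkj := le_total j k
  · calc sval (S - R j) (2 * k) ≤ sval (S - R j) (k + j) := sval_antitone _ (by omega)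
      _ ≤ sval S k := sval_sub_add_le_of_rank_le S (hrank j) k
      _ ≤ sval S k + (1 / 2) ^ k := le_add_of_nonneg_right (by positivity)
  · calc sval (S - R j) (2 * k) ≤ ‖S - R j‖ := sval_le_norm _ _
      _ ≤ sval S j + (1 / 2) ^ j := (hSR j).le
      _ ≤ sval S k + (1 / 2) ^ k := add_le_add (sval_antitone S hkj)
        (pow_le_pow_of_le_one (by norm_num) (by norm_num) hkj)

theorem tsum_inner_sub_mul_comm_of_rank_le {ι : Type*} (b : HilbertBasis ι ℂ H)
    {S T R : H →L[ℂ] H} (hST : Summable (sval (S * T))) (hTS : Summable (sval (T * S))) {r : ℕ}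
    (hR : LinearMap.rank (R : H →ₗ[ℂ] H) ≤ r) :
    ∑' i, inner ℂ (b i) (((S - R) * T) (b i)) - ∑' i, inner ℂ (b i) ((T * (S - R)) (b i)) =
      ∑' i, inner ℂ (b i) ((S * T) (b i)) - ∑' i, inner ℂ (b i) ((T * S) (b i)) := by
  obtain ⟨t, hRT, hTR⟩ := hasSum_inner_mul_comm_of_rank_le b hR T
  have hleft := (summable_inner_of_summable_sval b.orthonormal hST).hasSum.sub hRT
  have hright := (summable_inner_of_summable_sval b.orthonormal hTS).hasSum.sub hTR
  simp only [← inner_sub_right, ← sub_apply, ← sub_mul, ← mul_sub] at hleft hright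
  rw [hleft.tsum_eq, hright.tsum_eq, sub_sub_sub_cancel_right]

-- If `S` is approximated by `R j` of finite rank, then `S T` and `T S` have the same trace up to
-- the traces of `(S - R j) T` and `T (S - R j)`, which tend to `0` by dominated convergence.
theorem IsHolderPair.tsum_inner_mul_comm_of_tendsto {ι : Type*} (b : HilbertBasis ι ℂ H)
    {S T : H →L[ℂ] H} (h : IsHolderPair S T) (hS : Tendsto (sval S) atTop (𝓝 0)) :
    ∑' i, inner ℂ (b i) ((S * T) (b i)) = ∑' i, inner ℂ (b i) ((T * S) (b i)) := by
  obtain ⟨R, hrank, hlim, hSR⟩ := exists_rank_le_tendsto_of_tendsto_sval_zero hS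
  let g : ℕ → ℝ := fun k => (sval S k + (1 / 2) ^ k) * sval T k
  have hg : Summable g := by
    have hgeom : Summable fun k => (1 / 2 : ℝ) ^ k * sval T k :=
      (summable_geometric_two.mul_right ‖T‖).of_nonneg_of_le
        (fun k => mul_nonneg (by positivity) (sval_nonneg T k))
        fun k => mul_le_mul_of_nonneg_left (sval_le_norm T k) (by positivity)
    exact (Summable.add h hgeom).congr fun k => (add_mul _ _ _).symm
  have hfactors : ∀ j k, sval (S - R j) (2 * k) * sval T (2 * k) ≤ g k := fun j k =>
    mul_le_mul (hSR j k) (sval_antitone T (by omega)) (sval_nonneg _ _)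
      ((sval_nonneg _ _).trans (hSR j k))
  have hleft : ∀ j k, sval ((S - R j) * T) (4 * k) ≤ g k := fun j k =>
    (show 4 * k = 2 * k + 2 * k by ring) ▸ (sval_mul_le _ _ _ _).trans (hfactors j k)
  have hright : ∀ j k, sval (T * (S - R j)) (4 * k) ≤ g k := fun j k =>
    (show 4 * k = 2 * k + 2 * k by ring) ▸
      (sval_mul_le _ _ _ _).trans ((mul_comm _ _).trans_le (hfactors j k))
  have hsub : Tendsto (fun j => S - R j) atTop (𝓝 0) := sub_self S ▸ hlim.const_sub S
  have hleft0 := tendsto_tsum_inner_zero b.orthonormal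
    (zero_mul T ▸ hsub.mul_const T) hg four_ne_zero hleft
  have hright0 := tendsto_tsum_inner_zero b.orthonormal
    (mul_zero T ▸ hsub.const_mul T) hg four_ne_zero hright
  refine sub_eq_zero.1 (tendsto_nhds_unique ?_ (sub_zero (0 : ℂ) ▸ hleft0.sub hright0))
  simp only [tsum_inner_sub_mul_comm_of_rank_le b h.summable_sval_mul h.symm.summable_sval_mul
    (hrank _), tendsto_const_nhds]

theorem IsHolderPair.tsum_inner_mul_comm {ι : Type*} (b : HilbertBasis ι ℂ H) {S T : H →L[ℂ] H}
    (h : IsHolderPair S T) :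
    ∑' i, inner ℂ (b i) ((S * T) (b i)) = ∑' i, inner ℂ (b i) ((T * S) (b i)) := by
  obtain hS | hT := tendsto_zero_or_tendsto_zero_of_summable_mul (sval_antitone S) (sval_nonneg S)
    (sval_antitone T) (sval_nonneg T) h
  · exact h.tsum_inner_mul_comm_of_tendsto b hS
  · exact (h.symm.tsum_inner_mul_comm_of_tendsto b hT).symm

theorem opTrace_zero : opTrace (0 : H →L[ℂ] H) = 0 := by
  simp [opTrace]

theorem opTrace_add {S T : H →L[ℂ] H} (hS : Summable (sval S)) (hT : Summable (sval T)) :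
    opTrace (S + T) = opTrace S + opTrace T := by
  let b := (exists_hilbertBasis ℂ H).choose_spec.choose
  simpa only [opTrace, add_apply, inner_add_right] using
    (summable_inner_of_summable_sval b.orthonormal hS).tsum_add
      (summable_inner_of_summable_sval b.orthonormal hT)

theorem opTrace_smul (c : ℂ) (T : H →L[ℂ] H) : opTrace (c • T) = c * opTrace T := by
  simp only [opTrace, smul_apply, inner_smul_right, tsum_mul_left]

theorem IsHolderPair.opTrace_mul_comm {S T : H →L[ℂ] H} (h : IsHolderPair S T) :
    opTrace (S * T) = opTrace (T * S) :=
  h.tsum_inner_mul_comm _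

end Trace

section Schatten

variable {E : Type*} [NormedAddCommGroup E] [InnerProductSpace ℂ E]

theorem isCompactOperator_of_rank_le {R : E →L[ℂ] E} {r : ℕ}
    (hR : LinearMap.rank (R : E →ₗ[ℂ] E) ≤ r) : IsCompactOperator R := by
  have : FiniteDimensional ℂ (R : E →ₗ[ℂ] E).range :=
    Module.rank_lt_aleph0_iff.1 (hR.trans_lt Cardinal.natCast_lt_aleph0)
  let Rr : E →L[ℂ] (R : E →ₗ[ℂ] E).range := R.codRestrict _ fun x => ⟨x, rfl⟩
  exact (isCompactOperator_id_iff_finiteDimensional.2 this).comp_clm Rr |>.clm_comp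
    (R : E →ₗ[ℂ] E).range.subtypeL

theorem isCompactOperator_of_tendsto_sval_zero {T : H →L[ℂ] H}
    (hT : Tendsto (sval T) atTop (𝓝 0)) : IsCompactOperator T :=
  let ⟨_, hrank, hlim, _⟩ := exists_rank_le_tendsto_of_tendsto_sval_zero hT
  isCompactOperator_of_tendsto hlim <| .of_forall fun j => isCompactOperator_of_rank_le (hrank j)

theorem schattenNorm_lt_top_iff {p : ℝ} (hp : 0 < p) {T : E →L[ℂ] E} :
    schattenNorm p T < ⊤ ↔ Summable fun k => sval T k ^ p := by
  have hnonneg : ∀ k, 0 ≤ sval T k ^ p := fun k => Real.rpow_nonneg (sval_nonneg T k) p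
  rw [schattenNorm, ENNReal.rpow_lt_top_iff_of_pos (one_div_pos.2 hp), lt_top_iff_ne_top]
  refine ⟨fun h => ?_, fun h => h.tsum_ofReal_ne_top⟩
  simpa only [ENNReal.toReal_ofReal (hnonneg _)] using ENNReal.summable_toReal h

theorem memSchatten_iff_summable {p : ℝ} (hp : 0 < p) {T : H →L[ℂ] H} :
    MemSchatten p T ↔ Summable fun k => sval T k ^ p := by
  refine ⟨fun h => (schattenNorm_lt_top_iff hp).1 h.2, fun h =>
    ⟨isCompactOperator_of_tendsto_sval_zero ?_, (schattenNorm_lt_top_iff hp).2 h⟩⟩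
  have hroot := h.tendsto_atTop_zero.rpow_const (p := p⁻¹) (.inr (inv_nonneg.2 hp.le))
  simpa only [Real.rpow_rpow_inv (sval_nonneg T _) hp.ne',
    Real.zero_rpow (inv_ne_zero hp.ne')] using hroot

theorem memSchatten_one_iff {T : H →L[ℂ] H} : MemSchatten 1 T ↔ Summable (sval T) := by
  simp only [memSchatten_iff_summable one_pos, Real.rpow_one]

theorem memSchatten_natCast_iff {p : ℕ} (hp : p ≠ 0) {T : H →L[ℂ] H} :
    MemSchatten p T ↔ Summable fun k => sval T k ^ p := by
  simp only [memSchatten_iff_summable (Nat.cast_pos.2 (Nat.pos_of_ne_zero hp)), Real.rpow_natCast]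

end Schatten

section GradedCommutator

variable {E : Type*} [NormedAddCommGroup E] [InnerProductSpace ℂ E] {ε F : E →L[ℂ] E}

theorem gComm_eq (ε F θ : E →L[ℂ] E) : gComm ε F θ = F * θ - ε * θ * ε * F := by
  simp only [gComm, evenPart, oddPart, mul_smul_comm, smul_mul_assoc, mul_add, add_mul, mul_sub,
    sub_mul]
  module

theorem gComm_add (ε F θ₁ θ₂ : E →L[ℂ] E) :
    gComm ε F (θ₁ + θ₂) = gComm ε F θ₁ + gComm ε F θ₂ := by
  simp only [gComm_eq]
  noncomm_ring

theorem gComm_smul (ε F : E →L[ℂ] E) (c : ℂ) (θ : E →L[ℂ] E) :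
    gComm ε F (c • θ) = c • gComm ε F θ := by
  simp only [gComm_eq, mul_smul_comm, smul_mul_assoc, smul_sub]

theorem gComm_one (hε2 : ε * ε = 1) : gComm ε F 1 = 0 := by
  rw [gComm_eq, mul_one, mul_one, hε2, one_mul, sub_self]

theorem gComm_mul (hε2 : ε * ε = 1) (θ₁ θ₂ : E →L[ℂ] E) :
    gComm ε F (θ₁ * θ₂) = gComm ε F θ₁ * θ₂ + ε * θ₁ * ε * gComm ε F θ₂ := by
  have hεε : ε * θ₁ * (ε * ε) * θ₂ * ε * F = ε * θ₁ * θ₂ * ε * F := by rw [hε2, mul_one]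
  calc gComm ε F (θ₁ * θ₂) = F * θ₁ * θ₂ - ε * θ₁ * (ε * ε) * θ₂ * ε * F := by
        rw [gComm_eq, hεε]
        noncomm_ring
    _ = gComm ε F θ₁ * θ₂ + ε * θ₁ * ε * gComm ε F θ₂ := by
        rw [gComm_eq, gComm_eq]
        noncomm_ring

theorem gComm_list_prod (hε2 : ε * ε = 1) {l : List (E →L[ℂ] E)} (hl : ∀ θ ∈ l, gComm ε F θ = 0) :
    gComm ε F l.prod = 0 := by
  induction l with
  | nil => exact gComm_one hε2
  | cons θ l ih =>
    rw [List.forall_mem_cons] at hl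
    rw [List.prod_cons, gComm_mul hε2, hl.1, ih hl.2, zero_mul, mul_zero, add_zero]

theorem conj_mul_grading (hε2 : ε * ε = 1) (hFε : F * ε = -(ε * F)) : ε * F * ε = -F := by
  rw [mul_assoc, hFε, mul_neg, ← mul_assoc, hε2, one_mul]

theorem conj_gComm (hε2 : ε * ε = 1) (hFε : F * ε = -(ε * F)) (θ : E →L[ℂ] E) :
    ε * gComm ε F θ * ε = θ * F - F * (ε * θ * ε) := by
  have hεF : ε * F = -(F * ε) := by rw [hFε, neg_neg]
  calc ε * gComm ε F θ * ε = ε * F * θ * ε - ε * ε * θ * (ε * F * ε) := by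
        rw [gComm_eq]
        noncomm_ring
    _ = θ * F - F * (ε * θ * ε) := by
        rw [conj_mul_grading hε2 hFε, hε2, hεF]
        noncomm_ring

theorem gComm_gComm (hε2 : ε * ε = 1) (hF2 : F * F = 1) (hFε : F * ε = -(ε * F))
    (θ : E →L[ℂ] E) : gComm ε F (gComm ε F θ) = 0 := by
  rw [gComm_eq, conj_gComm hε2 hFε, gComm_eq]
  simp only [mul_sub, sub_mul, ← mul_assoc, hF2, one_mul]
  simp only [mul_assoc, hF2, mul_one]
  abel

theorem commute_gComm (hε2 : ε * ε = 1) (hF2 : F * F = 1) (hFε : F * ε = -(ε * F))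
    (θ : E →L[ℂ] E) : Commute (ε * F) (gComm ε F θ) := by
  have hF : F * gComm ε F θ = ε * gComm ε F θ * ε * F :=
    sub_eq_zero.1 (gComm_eq ε F _ ▸ gComm_gComm hε2 hF2 hFε θ)
  calc ε * F * gComm ε F θ = ε * ε * gComm ε F θ * (ε * F) := by
        rw [mul_assoc, hF]
        noncomm_ring
    _ = gComm ε F θ * (ε * F) := by rw [hε2, one_mul]

theorem conj_list_prod (hε2 : ε * ε = 1) {l : List (E →L[ℂ] E)} (hl : ∀ θ ∈ l, ε * θ * ε = -θ) :
    ε * l.prod * ε = (-1 : ℂ) ^ l.length • l.prod := by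
  induction l with
  | nil => simpa using hε2
  | cons θ l ih =>
    rw [List.forall_mem_cons] at hl
    calc ε * (θ :: l).prod * ε = ε * θ * (ε * ε) * l.prod * ε := by
          rw [hε2, mul_one, List.prod_cons, mul_assoc ε θ]
      _ = ε * θ * ε * (ε * l.prod * ε) := by noncomm_ring
      _ = (-1 : ℂ) ^ (θ :: l).length • (θ :: l).prod := by
          rw [hl.1, ih hl.2, List.prod_cons, List.length_cons, pow_succ, mul_neg_one, neg_smul,
            mul_smul_comm, neg_mul, smul_neg]

theorem gComm_of_commute (hε2 : ε * ε = 1) {T : E →L[ℂ] E} (hT : ε * T = T * ε) :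
    gComm ε F T = F * T - T * F := by
  rw [gComm_eq, hT, mul_assoc T, hε2, mul_one]

theorem dOp_eq_gD (hε2 : ε * ε = 1) {T : E →L[ℂ] E} (hT : ε * T = T * ε) :
    dOp F T = gD ε F T := by
  rw [dOp, gD, gComm_of_commute hε2 hT]

theorem gComm_dOp (hε2 : ε * ε = 1) (hF2 : F * F = 1) (hFε : F * ε = -(ε * F))
    {T : E →L[ℂ] E} (hT : ε * T = T * ε) : gComm ε F (dOp F T) = 0 := by
  rw [dOp_eq_gD hε2 hT, gD, gComm_smul, gComm_gComm hε2 hF2 hFε, smul_zero]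

theorem conj_dOp (hε2 : ε * ε = 1) (hFε : F * ε = -(ε * F)) {T : E →L[ℂ] E}
    (hT : ε * T = T * ε) : ε * dOp F T * ε = -dOp F T := by
  have hTε : ε * T * ε = T := by rw [hT, mul_assoc, hε2, mul_one]
  rw [dOp_eq_gD hε2 hT, gD, mul_smul_comm, smul_mul_assoc, conj_gComm hε2 hFε,
    gComm_of_commute hε2 hT, hTε, ← smul_neg, neg_sub]

end GradedCommutator

section Omega

variable {E : Type*} [NormedAddCommGroup E] [InnerProductSpace ℂ E] {ε F : E →L[ℂ] E}
  {ρ : A →ₐ[ℂ] (E →L[ℂ] E)}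

@[elab_as_elim]
theorem Omega.induction_on {j : ℕ} {p : (E →L[ℂ] E) → Prop} {ω : E →L[ℂ] E}
    (hω : ω ∈ Omega ρ F j)
    (mul_prod : ∀ (a : A) (l : List A), l.length = j →
      p (ρ a * (l.map fun b => dOp F (ρ b)).prod))
    (add : ∀ ω₁ ω₂, p ω₁ → p ω₂ → p (ω₁ + ω₂)) (smul : ∀ (c : ℂ) ω, p ω → p (c • ω)) : p ω := by
  induction hω using Submodule.span_induction with
  | mem _ hx =>
    obtain ⟨a, rfl⟩ := hx
    let a' : ℕ → A := fun k => a ⟨k % (j + 1), Nat.mod_lt _ (Nat.succ_pos j)⟩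
    simpa [opList, Function.comp_def] using
      mul_prod (a 0) ((List.range' 1 j).map a') (by simp)
  | zero => simpa using smul 0 _ (mul_prod 0 (List.replicate j 0) List.length_replicate)
  | add _ _ _ _ h₁ h₂ => exact add _ _ h₁ h₂
  | smul c _ _ h => exact smul c _ h

theorem one_mem_omega_zero : 1 ∈ Omega ρ F 0 :=
  Submodule.subset_span ⟨fun _ => 1, by simp [opList]⟩

theorem conj_of_mem_omega (hε2 : ε * ε = 1) (hFε : F * ε = -(ε * F))
    (heven : ∀ a, ε * ρ a = ρ a * ε) {j : ℕ} {ω : E →L[ℂ] E} (hω : ω ∈ Omega ρ F j) :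
    ε * ω * ε = (-1 : ℂ) ^ j • ω := by
  refine Omega.induction_on hω (fun a l hl => ?_) (fun ω₁ ω₂ h₁ h₂ => ?_) fun c ω h => ?_
  · have hprod := conj_list_prod hε2 (l := l.map fun b => dOp F (ρ b))
      (List.forall_mem_map.2 fun b _ => conj_dOp hε2 hFε (heven b))
    rw [← mul_assoc, heven, mul_assoc (ρ a), mul_assoc (ρ a), hprod, List.length_map, hl,
      mul_smul_comm]
  · rw [mul_add, add_mul, h₁, h₂, smul_add]
  · rw [mul_smul_comm, smul_mul_assoc, h, smul_comm]

theorem gComm_mul_list_prod_dOp (hε2 : ε * ε = 1) (hF2 : F * F = 1) (hFε : F * ε = -(ε * F))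
    (heven : ∀ a, ε * ρ a = ρ a * ε) (a : A) (l : List A) :
    gComm ε F (ρ a * (l.map fun b => dOp F (ρ b)).prod) =
      -Complex.I • ((a :: l).map fun b => dOp F (ρ b)).prod := by
  have hclosed := gComm_list_prod hε2 (l := l.map fun b => dOp F (ρ b))
    (List.forall_mem_map.2 fun b _ => gComm_dOp hε2 hF2 hFε (heven b))
  have hdOp : gComm ε F (ρ a) = -Complex.I • dOp F (ρ a) := by
    rw [dOp_eq_gD hε2 (heven a), gD, smul_smul, neg_mul, Complex.I_mul_I, neg_neg, one_smul]
  rw [gComm_mul hε2, hclosed, mul_zero, add_zero, hdOp, smul_mul_assoc, List.map_cons,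
    List.prod_cons]

theorem isHolderPair_gComm_of_mem_omega (hε2 : ε * ε = 1) (hF2 : F * F = 1)
    (hFε : F * ε = -(ε * F)) (heven : ∀ a, ε * ρ a = ρ a * ε) {n₁ n₂ : ℕ}
    (hS : ∀ a, Summable fun k => sval (dOp F (ρ a)) k ^ (n₁ + n₂ + 1)) {ω₁ ω₂ : E →L[ℂ] E}
    (hω₁ : ω₁ ∈ Omega ρ F n₁) (hω₂ : ω₂ ∈ Omega ρ F n₂) : IsHolderPair (gComm ε F ω₁) ω₂ := by
  refine Omega.induction_on hω₁ (fun a l hl => ?_)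
    (fun _ _ h h' => gComm_add ε F _ _ ▸ h.add_left h')
    fun c _ h => gComm_smul ε F c _ ▸ h.smul_left c
  refine Omega.induction_on hω₂ (fun b l' hl' => ?_) (fun _ _ h h' => h.add_right h')
    fun c _ h => h.smul_right c
  rw [gComm_mul_list_prod_dOp hε2 hF2 hFε heven]
  refine ((isHolderPair_list_prod (by simp) ?_).smul_left _).mul_right _
  rw [← List.map_append, List.forall_mem_map, List.length_map, List.length_append,
    List.length_cons, hl, hl', add_right_comm]
  exact fun c _ => hS c

end Omega

section GradedTrace

variable {ε F : H →L[ℂ] H}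

theorem trs_gD (hε2 : ε * ε = 1) (hF2 : F * F = 1) (hFε : F * ε = -(ε * F)) (θ : H →L[ℂ] H) :
    Trs ε F (gD ε F θ) = 0 := by
  rw [Trs, gD, gComm_smul, gComm_gComm hε2 hF2 hFε, smul_zero, mul_zero, opTrace_zero, mul_zero]

theorem trs_mul (hε2 : ε * ε = 1) (hF2 : F * F = 1) (hFε : F * ε = -(ε * F)) {s : ℂ}
    {ω₁ ω₂ : H →L[ℂ] H} (hω₁ : ε * ω₁ * ε = s • ω₁) (h : IsHolderPair (gComm ε F ω₁) ω₂)
    (h' : IsHolderPair (gComm ε F ω₂) ω₁) :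
    Trs ε F (ω₁ * ω₂) = 2⁻¹ * (opTrace (ε * F * ω₂ * gComm ε F ω₁) +
      s * opTrace (ε * F * ω₁ * gComm ε F ω₂)) := by
  have h₁ : IsHolderPair (gComm ε F ω₁) (ε * F * ω₂) := h.mul_right _
  have h₂ : IsHolderPair (s • (ε * F * ω₁)) (gComm ε F ω₂) := (h'.symm.mul_left _).smul_left s
  have hLeibniz : ε * F * gComm ε F (ω₁ * ω₂) =
      gComm ε F ω₁ * (ε * F * ω₂) + s • (ε * F * ω₁) * gComm ε F ω₂ := by
    rw [gComm_mul hε2, hω₁, mul_add, ← mul_assoc, (commute_gComm hε2 hF2 hFε ω₁).eq, mul_assoc,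
      smul_mul_assoc, mul_smul_comm, smul_mul_assoc, mul_assoc (ε * F) ω₁]
  rw [Trs, hLeibniz, opTrace_add h₁.summable_sval_mul h₂.summable_sval_mul, h₁.opTrace_mul_comm,
    smul_mul_assoc, opTrace_smul]

theorem trs_mul_comm (hε2 : ε * ε = 1) (hF2 : F * F = 1) (hFε : F * ε = -(ε * F)) {s : ℂ}
    (hs : s * s = 1) {ω₁ ω₂ : H →L[ℂ] H} (hω₁ : ε * ω₁ * ε = s • ω₁)
    (hω₂ : ε * ω₂ * ε = s • ω₂) (h : IsHolderPair (gComm ε F ω₁) ω₂)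
    (h' : IsHolderPair (gComm ε F ω₂) ω₁) : Trs ε F (ω₁ * ω₂) = s * Trs ε F (ω₂ * ω₁) := by
  rw [trs_mul hε2 hF2 hFε hω₁ h h', trs_mul hε2 hF2 hFε hω₂ h' h]
  linear_combination (-2⁻¹ * opTrace (ε * F * ω₂ * gComm ε F ω₁)) * hs

end GradedTrace

theorem trs_closed_graded_trace_general {n : ℕ} (hn : Even n) {ε F : H →L[ℂ] H}
    (hε2 : ε * ε = 1) (hF2 : F * F = 1) (hFε : F * ε = -(ε * F))
    {ρ : A →ₐ[ℂ] (H →L[ℂ] H)} (heven : ∀ a : A, ε * ρ a = ρ a * ε)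
    (hS : ∀ a : A, MemSchatten ((n : ℝ) + 1) (F * ρ a - ρ a * F)) :
    (∀ ω ∈ Omega ρ F n, MemSchatten 1 (gComm ε F ω)) ∧
    (∀ θ : H →L[ℂ] H, Trs ε F (gD ε F θ) = 0) ∧
    (∀ n₁ n₂ : ℕ, n₁ + n₂ = n → ∀ ω₁ ∈ Omega ρ F n₁, ∀ ω₂ ∈ Omega ρ F n₂,
      Trs ε F (ω₁ * ω₂) = (-1 : ℂ) ^ (n₁ * n₂) * Trs ε F (ω₂ * ω₁)) := by
  have hd : ∀ a, Summable fun k => sval (dOp F (ρ a)) k ^ (n + 1) := fun a => by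
    have hcomm := (memSchatten_natCast_iff n.succ_ne_zero).1 (by simpa using hS a)
    simpa [dOp] using summable_sval_mul_pow hcomm (Complex.I • 1)
  have hpair : ∀ {n₁ n₂ : ℕ}, n₁ + n₂ = n → ∀ {ω₁ ω₂}, ω₁ ∈ Omega ρ F n₁ → ω₂ ∈ Omega ρ F n₂ →
      IsHolderPair (gComm ε F ω₁) ω₂ := fun hadd _ _ =>
    isHolderPair_gComm_of_mem_omega hε2 hF2 hFε heven (hadd.symm ▸ hd)
  refine ⟨fun ω hω => ?_, trs_gD hε2 hF2 hFε, fun n₁ n₂ hadd ω₁ hω₁ ω₂ hω₂ => ?_⟩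
  · simpa only [mul_one] using
      memSchatten_one_iff.2 (hpair (add_zero n) hω one_mem_omega_zero).summable_sval_mul
  · have hparity : Even n₁ ↔ Even n₂ := Nat.even_add.1 (hadd ▸ hn)
    have hsign : (-1 : ℂ) ^ (n₁ * n₂) = (-1) ^ n₁ :=
      neg_one_pow_congr (by rw [Nat.even_mul, ← hparity, or_self])
    have hω₂' : ε * ω₂ * ε = (-1 : ℂ) ^ n₁ • ω₂ :=
      neg_one_pow_congr (R := ℂ) hparity ▸ conj_of_mem_omega hε2 hFε heven hω₂
    have hsq : (-1 : ℂ) ^ n₁ * (-1) ^ n₁ = 1 := by rw [← mul_pow, neg_one_mul, neg_neg, one_pow]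
    exact hsign ▸ trs_mul_comm hε2 hF2 hFε hsq (conj_of_mem_omega hε2 hFε heven hω₁) hω₂'
      (hpair hadd hω₁ hω₂) (hpair (add_comm n₂ n₁ ▸ hadd) hω₂ hω₁)

/-- Let `n = 2m` be a positive even integer, `(H, ε)` ℤ₂-graded, `F` bounded with `F² = 1`,
`Fε = -εF`, `Ã` a unital ℂ-algebra, and `ρ : Ã → B(H)` a unital homomorphism into even
operators with `Fρ(a) - ρ(a)F` being `(n+1)`-Schatten for all `a`.  Then: (i) `[F,ω]` is
trace class for every `ω ∈ Ωⁿ`; (ii) `Tr_s(dω) = 0` for `ω ∈ Ω^{n-1}`; (iii) for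
`ω₁ ∈ Ω^{n₁}`, `ω₂ ∈ Ω^{n₂}` with `n₁ + n₂ = n`, one has
`Tr_s(ω₁ω₂) = (-1)^{n₁n₂} Tr_s(ω₂ω₁)`.  That is, `Tr_s` restricted to `Ωⁿ` is a closed
graded trace of dimension `n` on the differential graded algebra `Ω`. -/
theorem trs_closed_graded_trace (m n : ℕ) (hm : 0 < m) (hn : n = 2 * m)
    (ε F : H →L[ℂ] H) (hε : IsSelfAdjoint ε) (hε2 : ε * ε = 1) (hF2 : F * F = 1)
    (hFε : F * ε = -(ε * F))
    (ρ : A →ₐ[ℂ] (H →L[ℂ] H)) (heven : ∀ a : A, ε * ρ a = ρ a * ε)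
    (hS : ∀ a : A, MemSchatten ((n : ℝ) + 1) (F * ρ a - ρ a * F)) :
    (∀ ω ∈ Omega ρ F n, MemSchatten 1 (gComm ε F ω)) ∧
    (∀ ω ∈ Omega ρ F (n - 1), Trs ε F (gD ε F ω) = 0) ∧
    (∀ n₁ n₂ : ℕ, n₁ + n₂ = n → ∀ ω₁ ∈ Omega ρ F n₁, ∀ ω₂ ∈ Omega ρ F n₂,
      Trs ε F (ω₁ * ω₂) = (-1 : ℂ) ^ (n₁ * n₂) * Trs ε F (ω₂ * ω₁)) :=
  let ⟨htrace, hclosed, hcyclic⟩ :=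
    trs_closed_graded_trace_general (hn ▸ even_two_mul m) hε2 hF2 hFε heven hS
  ⟨htrace, fun ω _ => hclosed ω, hcyclic⟩
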